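/- arXiv:1810.11991 — 2 statements merged into one kernel-verified Lean document; each statement's English description precedes it below -/
import Mathlib

section
/- On {u₁ ≠ u₂} ⊂ ℝ⁴ with canonical bracket, the Hamiltonian H = (p_{u₁}/2)²/(u₁−u₂) + p_{u₂}²/(u₂−u₁) − u₁² − u₁u₂ − u₂² (case k₁=2, k₂=1) Poisson-commutes with the rational function C₂₁ = 4u₁ − 3u₂ − 8(u₁−u₂)(6u₁³ − 12u₁²u₂ + 6u₁u₂² + p_{u₁}p_{u₂} − 2p_{u₂}²)/D + 64(u₁−u₂)⁴(2u₁³ − 3u₁²u₂ + u₂³ + p_{u₁}p_{u₂} − p_{u₂}²)/D², where D = 8u₁³ − 12u₁²u₂ + 4u₂³ − p_{u₁}² + 4p_{u₁}p_{u₂} − 4p_{u₂}². -/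
/-- Canonical Poisson bracket on phase space ℝ⁴ with coordinates
(u₁, u₂, p₁, p₂):  {F,G} = Σᵢ (∂F/∂uᵢ ∂G/∂pᵢ − ∂F/∂pᵢ ∂G/∂uᵢ). -/
noncomputable def pb (F G : ℝ × ℝ × ℝ × ℝ → ℝ) (z : ℝ × ℝ × ℝ × ℝ) : ℝ :=
  fderiv ℝ F z (1, 0, 0, 0) * fderiv ℝ G z (0, 0, 1, 0)
  - fderiv ℝ F z (0, 0, 1, 0) * fderiv ℝ G z (1, 0, 0, 0)
  + fderiv ℝ F z (0, 1, 0, 0) * fderiv ℝ G z (0, 0, 0, 1)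
  - fderiv ℝ F z (0, 0, 0, 1) * fderiv ℝ G z (0, 1, 0, 0)

noncomputable def DFun (z : ℝ × ℝ × ℝ × ℝ) : ℝ :=
  8 * z.1 ^ 3 - 12 * z.1 ^ 2 * z.2.1 + 4 * z.2.1 ^ 3
    - z.2.2.1 ^ 2 + 4 * z.2.2.1 * z.2.2.2 - 4 * z.2.2.2 ^ 2

/-!
Write `δ = u₁ - u₂` and let a dot denote the derivative along the Hamiltonian vector field `X` of `H`,
so that `{H, G} = -Ġ = -dG(X)`. The denominator `D = 4 δ² (2 u₁ + u₂) - (p₁ - 2 p₂)²` satisfies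
`Ḋ = λ D` with `λ = 3 (p₁ + 2 p₂) / (2 δ²)`: it is a Darboux polynomial of `X`.
With `C₂₁ = L - N / D + M / D²`, the derivative of `C₂₁` is therefore
`L̇ - (Ṅ - λ N) / D + (Ṁ - 2 λ M) / D²`, and its vanishing is a rational identity in the four
coordinates.
-/

/-- Along the line `t ↦ z + t • v` each coordinate has the corresponding component of `v` as its
derivative. -/
theorem hasDerivAt_line (z v : ℝ × ℝ × ℝ × ℝ) :
    HasDerivAt (fun t : ℝ => (z + t • v).1) v.1 0 ∧
    HasDerivAt (fun t : ℝ => (z + t • v).2.1) v.2.1 0 ∧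
    HasDerivAt (fun t : ℝ => (z + t • v).2.2.1) v.2.2.1 0 ∧
    HasDerivAt (fun t : ℝ => (z + t • v).2.2.2) v.2.2.2 0 := by
  have h (a b : ℝ) : HasDerivAt (fun t : ℝ => a + t * b) b 0 := by
    simpa using ((hasDerivAt_id (0 : ℝ)).mul_const b).const_add a
  exact ⟨h _ _, h _ _, h _ _, h _ _⟩

/-- The Hamiltonian vector field of `H`, i.e. `(∂H/∂p₁, ∂H/∂p₂, -∂H/∂u₁, -∂H/∂u₂)`. -/
noncomputable def hamVec (z : ℝ × ℝ × ℝ × ℝ) : ℝ × ℝ × ℝ × ℝ :=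
  (z.2.2.1 / (2 * (z.1 - z.2.1)),
    -2 * z.2.2.2 / (z.1 - z.2.1),
    (z.2.2.1 ^ 2 - 4 * z.2.2.2 ^ 2) / (4 * (z.1 - z.2.1) ^ 2) + 2 * z.1 + z.2.1,
    -(z.2.2.1 ^ 2 - 4 * z.2.2.2 ^ 2) / (4 * (z.1 - z.2.1) ^ 2) + z.1 + 2 * z.2.1)

theorem fderiv_apply_eq_of_hasDerivAt {G : ℝ × ℝ × ℝ × ℝ → ℝ} {z v : ℝ × ℝ × ℝ × ℝ} {g : ℝ}
    (hG : DifferentiableAt ℝ G z)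
    (h : HasDerivAt (fun t : ℝ => G (z + t • v)) g 0) : fderiv ℝ G z v = g := by
  rw [← hG.lineDeriv_eq_fderiv]
  exact HasLineDerivAt.lineDeriv h

/-- The differential of `H`, evaluated on an arbitrary tangent vector `v`. -/
theorem fderiv_ham_apply (z v : ℝ × ℝ × ℝ × ℝ) (hz : z.1 ≠ z.2.1) :
    fderiv ℝ (fun z : ℝ × ℝ × ℝ × ℝ => (z.2.2.1 / 2) ^ 2 / (z.1 - z.2.1)
            + z.2.2.2 ^ 2 / (z.2.1 - z.1)
            - z.1 ^ 2 - z.1 * z.2.1 - z.2.1 ^ 2) z v =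
      (hamVec z).1 * v.2.2.1 + (hamVec z).2.1 * v.2.2.2
        - (hamVec z).2.2.1 * v.1 - (hamVec z).2.2.2 * v.2.1 := by
  have hδ : z.1 - z.2.1 ≠ 0 := sub_ne_zero.mpr hz
  have hδ' : z.2.1 - z.1 ≠ 0 := sub_ne_zero.mpr hz.symm
  refine fderiv_apply_eq_of_hasDerivAt (by fun_prop (disch := assumption)) ?_
  obtain ⟨hu, hw, hp, hq⟩ := hasDerivAt_line z v
  have := (((((hp.div_const 2).pow 2).div (hu.sub hw) (by simpa using hδ)).add
    ((hq.pow 2).div (hw.sub hu) (by simpa using hδ'))).sub (hu.pow 2)).sub (hu.mul hw) |>.sub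
    (hw.pow 2)
  refine this.congr_deriv ?_
  obtain ⟨u, w, p, q⟩ := z
  have e : w - u = -(u - w) := by ring
  simp only [hamVec, Pi.pow_apply, Pi.sub_apply, zero_smul, add_zero] at hδ ⊢
  rw [e]
  field_simp
  ring

theorem pb_eq_neg_fderiv {F G : ℝ × ℝ × ℝ × ℝ → ℝ} {z v : ℝ × ℝ × ℝ × ℝ}
    (h₁ : fderiv ℝ F z (0, 0, 1, 0) = v.1) (h₂ : fderiv ℝ F z (0, 0, 0, 1) = v.2.1)
    (h₃ : fderiv ℝ F z (1, 0, 0, 0) = -v.2.2.1) (h₄ : fderiv ℝ F z (0, 1, 0, 0) = -v.2.2.2) :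
    pb F G z = -fderiv ℝ G z v := by
  obtain ⟨a, b, c, d⟩ := v
  have hv : ((a, b, c, d) : ℝ × ℝ × ℝ × ℝ) =
      a • (1, 0, 0, 0) + b • (0, 1, 0, 0) + c • (0, 0, 1, 0) + d • (0, 0, 0, 1) := by
    simp
  rw [hv]
  simp only [pb, h₁, h₂, h₃, h₄, map_add, map_smul, smul_eq_mul]
  ring

/-- `D` is a Darboux polynomial: its derivative along the Hamiltonian vector field is a multiple of
`D`. -/
theorem hasDerivAt_DFun (z : ℝ × ℝ × ℝ × ℝ) (hz : z.1 ≠ z.2.1) :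
    HasDerivAt (fun t : ℝ => DFun (z + t • hamVec z))
      (3 * (z.2.2.1 + 2 * z.2.2.2) / (2 * (z.1 - z.2.1) ^ 2) * DFun z) 0 := by
  obtain ⟨u, w, p, q⟩ := z
  have hδ : u - w ≠ 0 := sub_ne_zero.mpr hz
  have key := hasDerivAt_line (u, w, p, q) (hamVec (u, w, p, q))
  obtain ⟨hu, hw, hp, hq⟩ := key
  have := ((((hu.pow 3).const_mul 8).sub (((hu.pow 2).const_mul 12).mul hw)).add
    ((hw.pow 3).const_mul 4)).sub (hp.pow 2) |>.add ((hp.const_mul 4).mul hq) |>.sub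
    ((hq.pow 2).const_mul 4)
  refine this.congr_deriv ?_
  simp only [hamVec, DFun, Pi.pow_apply, zero_smul, add_zero]
  field_simp
  ring

/-- The k₁ = 2, k₂ = 1 Hamiltonian Poisson-commutes with the rational first
integral C₂₁. -/
theorem stmt_7 :
    ∀ z : ℝ × ℝ × ℝ × ℝ, z.1 ≠ z.2.1 → DFun z ≠ 0 →
      pb (fun z => (z.2.2.1 / 2) ^ 2 / (z.1 - z.2.1)
            + z.2.2.2 ^ 2 / (z.2.1 - z.1)
            - z.1 ^ 2 - z.1 * z.2.1 - z.2.1 ^ 2)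
         (fun z => 4 * z.1 - 3 * z.2.1
            - 8 * (z.1 - z.2.1) *
              (6 * z.1 ^ 3 - 12 * z.1 ^ 2 * z.2.1 + 6 * z.1 * z.2.1 ^ 2
                + z.2.2.1 * z.2.2.2 - 2 * z.2.2.2 ^ 2) / DFun z
            + 64 * (z.1 - z.2.1) ^ 4 *
              (2 * z.1 ^ 3 - 3 * z.1 ^ 2 * z.2.1 + z.2.1 ^ 3
                + z.2.2.1 * z.2.2.2 - z.2.2.2 ^ 2) / (DFun z) ^ 2) z = 0 := by
  intro z hz hD
  have hδ : z.1 - z.2.1 ≠ 0 := sub_ne_zero.mpr hz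
  have hDz : DFun (z + (0 : ℝ) • hamVec z) ≠ 0 := by simpa using hD
  have hDd : DifferentiableAt ℝ DFun z := by
    unfold DFun
    fun_prop
  rw [pb_eq_neg_fderiv (v := hamVec z), neg_eq_zero]
  · refine fderiv_apply_eq_of_hasDerivAt
      (by fun_prop (disch := first | assumption | exact pow_ne_zero 2 hD)) ?_
    obtain ⟨hu, hw, hp, hq⟩ := hasDerivAt_line z (hamVec z)
    have hd := hasDerivAt_DFun z hz
    have hN := ((hu.sub hw).const_mul 8).mul (((((hu.pow 3).const_mul 6).sub
      (((hu.pow 2).const_mul 12).mul hw)).add ((hu.const_mul 6).mul (hw.pow 2))).add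
      (hp.mul hq) |>.sub ((hq.pow 2).const_mul 2))
    have hM := (((hu.sub hw).pow 4).const_mul 64).mul (((((hu.pow 3).const_mul 2).sub
      (((hu.pow 2).const_mul 3).mul hw)).add (hw.pow 3)).add (hp.mul hq) |>.sub (hq.pow 2))
    have := (((hu.const_mul 4).sub (hw.const_mul 3)).sub (hN.div hd hDz)).add
      (hM.div (hd.pow 2) (pow_ne_zero 2 hDz))
    refine this.congr_deriv ?_
    simp only [Pi.pow_apply, Pi.mul_apply, Pi.add_apply, Pi.sub_apply, zero_smul, add_zero]
    obtain ⟨u, w, p, q⟩ := z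
    generalize hE : DFun (u, w, p, q) = E at *
    simp only [DFun] at hE
    simp only [hamVec] at hδ ⊢
    field_simp
    subst hE
    ring
  all_goals
    rw [fderiv_ham_apply z _ hz]
    simp
end

section
/- With φ(z) = (z−α₁)(z−α₂)(z−α₃), φᵢ := φ(uᵢ), and the geodesic Hamiltonian 2H = φ(u₁)p_{u₁}²/(u₁−u₂) + φ(u₂)p_{u₂}²/(u₂−u₁), the function C = −[ (α₁α₂α₃ − (α₁α₂+α₁α₃+α₂α₃)u₁ + (α₁+α₂+α₃)u₂² − u₁u₂²)φ₁p_{u₁}² + (α₁α₂α₃ − (α₁α₂+α₁α₃+α₂α₃)u₂ + (α₁+α₂+α₃)u₁² − u₁²u₂)φ₂p_{u₂}² + 2φ₁φ₂p_{u₁}p_{u₂} ] / (u₁−u₂)² satisfies {H, C} = 0. -/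
noncomputable def φ (α₁ α₂ α₃ x : ℝ) : ℝ := (x - α₁) * (x - α₂) * (x - α₃)

/-- The bracket may be computed from any derivatives of the two functions at the point. -/
lemma pb_eq_of_hasFDerivAt {F G : ℝ × ℝ × ℝ × ℝ → ℝ} {F' G' : ℝ × ℝ × ℝ × ℝ →L[ℝ] ℝ}
    {z : ℝ × ℝ × ℝ × ℝ} (hF : HasFDerivAt F F' z) (hG : HasFDerivAt G G' z) :
    pb F G z = F' (1, 0, 0, 0) * G' (0, 0, 1, 0) - F' (0, 0, 1, 0) * G' (1, 0, 0, 0)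
      + F' (0, 1, 0, 0) * G' (0, 0, 0, 1) - F' (0, 0, 0, 1) * G' (0, 1, 0, 0) := by
  rw [pb, hF.fderiv, hG.fderiv]

lemma φ_eq (a b c x : ℝ) :
    φ a b c x = x ^ 3 - (a + b + c) * x ^ 2 + (a * b + a * c + b * c) * x - a * b * c := by
  rw [φ]
  ring

lemma hasDerivAt_φ (a b c x : ℝ) :
    HasDerivAt (φ a b c) (3 * x ^ 2 - 2 * (a + b + c) * x + (a * b + a * c + b * c)) x := by
  have h := (((hasDerivAt_id x).sub_const a).mul ((hasDerivAt_id x).sub_const b)).mul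
    ((hasDerivAt_id x).sub_const c)
  refine HasDerivAt.congr_deriv (f := φ a b c) h ?_
  simp
  ring

/-- Quotient rule for real-valued functions on phase space. -/
lemma hasFDerivAt_quotient {f g : ℝ × ℝ × ℝ × ℝ → ℝ} {f' g' : ℝ × ℝ × ℝ × ℝ →L[ℝ] ℝ}
    {z : ℝ × ℝ × ℝ × ℝ} (hf : HasFDerivAt f f' z) (hg : HasFDerivAt g g' z) (h0 : g z ≠ 0) :
    HasFDerivAt (fun x => f x / g x) (f z • (-(g z ^ 2)⁻¹ • g') + (g z)⁻¹ • f') z := by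
  simp only [div_eq_mul_inv]
  exact hf.mul ((hasDerivAt_inv h0).comp_hasFDerivAt z hg)

/-- The geodesic Hamiltonian Poisson-commutes with Euler's additional
integral C on the sphere. -/
theorem stmt_14 (α₁ α₂ α₃ : ℝ) (h12 : α₁ < α₂) (h23 : α₂ < α₃) :
    ∀ z : ℝ × ℝ × ℝ × ℝ, α₁ < z.1 → z.1 < α₂ → α₂ < z.2.1 → z.2.1 < α₃ →
      pb (fun z => (φ α₁ α₂ α₃ z.1 * z.2.2.1 ^ 2 / (z.1 - z.2.1)
            + φ α₁ α₂ α₃ z.2.1 * z.2.2.2 ^ 2 / (z.2.1 - z.1)) / 2)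
         (fun z =>
            -(((α₁ * α₂ * α₃ - (α₁ * α₂ + α₁ * α₃ + α₂ * α₃) * z.1
                  + (α₁ + α₂ + α₃) * z.2.1 ^ 2 - z.1 * z.2.1 ^ 2)
                  * φ α₁ α₂ α₃ z.1 * z.2.2.1 ^ 2
              + (α₁ * α₂ * α₃ - (α₁ * α₂ + α₁ * α₃ + α₂ * α₃) * z.2.1
                  + (α₁ + α₂ + α₃) * z.1 ^ 2 - z.1 ^ 2 * z.2.1)
                  * φ α₁ α₂ α₃ z.2.1 * z.2.2.2 ^ 2
              + 2 * φ α₁ α₂ α₃ z.1 * φ α₁ α₂ α₃ z.2.1 * z.2.2.1 * z.2.2.2)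
              / (z.1 - z.2.1) ^ 2)) z = 0 := by
  rintro ⟨u, w, p, q⟩ - hu2 hw2 -
  simp only at hu2 hw2
  have hne : u - w ≠ 0 := by linarith
  have hne' : w - u ≠ 0 := by linarith
  let S₁ := ContinuousLinearMap.snd ℝ ℝ (ℝ × ℝ × ℝ)
  let S₂ := ContinuousLinearMap.snd ℝ ℝ (ℝ × ℝ) ∘L S₁
  have hu := (ContinuousLinearMap.fst ℝ ℝ (ℝ × ℝ × ℝ)).hasFDerivAt (x := (u, w, p, q))
  have hw := (ContinuousLinearMap.fst ℝ ℝ (ℝ × ℝ) ∘L S₁).hasFDerivAt (x := (u, w, p, q))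
  have hp := (ContinuousLinearMap.fst ℝ ℝ ℝ ∘L S₂).hasFDerivAt (x := (u, w, p, q))
  have hq := (ContinuousLinearMap.snd ℝ ℝ ℝ ∘L S₂).hasFDerivAt (x := (u, w, p, q))
  have hf := (hasDerivAt_φ α₁ α₂ α₃ u).comp_hasFDerivAt (u, w, p, q) hu
  have hg := (hasDerivAt_φ α₁ α₂ α₃ w).comp_hasFDerivAt (u, w, p, q) hw
  have hH := hasFDerivAt_quotient
    ((hasFDerivAt_quotient (hf.mul (hp.pow 2)) (hu.sub hw) hne).add
      (hasFDerivAt_quotient (hg.mul (hq.pow 2)) (hw.sub hu) hne'))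
    (hasFDerivAt_const (2 : ℝ) _) two_ne_zero
  have hA := (((hu.const_mul (α₁ * α₂ + α₁ * α₃ + α₂ * α₃)).const_sub (α₁ * α₂ * α₃)).add
    ((hw.pow 2).const_mul (α₁ + α₂ + α₃))).sub (hu.mul (hw.pow 2))
  have hB := (((hw.const_mul (α₁ * α₂ + α₁ * α₃ + α₂ * α₃)).const_sub (α₁ * α₂ * α₃)).add
    ((hu.pow 2).const_mul (α₁ + α₂ + α₃))).sub ((hu.pow 2).mul hw)
  have hC := (hasFDerivAt_quotient
    ((((hA.mul hf).mul (hp.pow 2)).add ((hB.mul hg).mul (hq.pow 2))).add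
      ((((hf.const_mul 2).mul hg).mul hp).mul hq)) ((hu.sub hw).pow 2) (pow_ne_zero 2 hne)).neg
  refine (pb_eq_of_hasFDerivAt hH hC).trans ?_
  simp only [ContinuousLinearMap.coe_fst', ContinuousLinearMap.comp_apply,
    ContinuousLinearMap.coe_snd', Pi.mul_apply, Function.comp_apply, Pi.sub_apply, Pi.add_apply,
    smul_zero, Nat.add_one_sub_one, pow_one, nsmul_eq_mul, Nat.cast_ofNat, smul_add, zero_add,
    add_apply, smul_apply, sub_apply, sub_zero, smul_eq_mul, mul_one, mul_neg, mul_zero, zero_sub,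
    neg_neg, add_zero, neg_apply, neg_zero, sub_self, neg_mul, S₂, S₁]
  simp only [φ_eq]
  -- only the elementary symmetric functions of the `αᵢ` occur
  generalize α₁ + α₂ + α₃ = s₁
  generalize α₁ * α₂ + α₁ * α₃ + α₂ * α₃ = s₂
  generalize α₁ * α₂ * α₃ = s₃
  clear hu hw hp hq hf hg hH hA hB hC
  -- with `u = w + d` the common denominator is a power of the single variable `d`
  obtain ⟨d, rfl⟩ : ∃ d, u = w + d := ⟨u - w, by ring⟩
  have e1 : w + d - w = d := by ring
  have e2 : w - (w + d) = -d := by ring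
  rw [e1] at hne
  simp only [e1, e2]
  field_simp
  ring
end
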